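/- arXiv:1005.0521 — 2 statements merged into one kernel-verified Lean document; each statement's English description precedes it below -/
import Mathlib

section
/- Let α be a type and let R, Ro be binary relations on α (R is 'generic rewriting', Ro is 'outermost rewriting') such that Ro is contained in R and the following local commutation property holds: whenever Ro G H and R G J with H ≠ J, either Ro J H, or there exists K with R H K and Ro J K. Then for all n, m and all G, H, J, if G Ro^n H and G R^m J, there exist K and natural numbers k, l such that H R^k K, J Ro^l K, and n + k ≤ m + l. -/
/-- `NSteps R n x y` : there is a chain `x = f 0, f 1, …, f n = y` with
`R (f i) (f (i+1))` for each `i < n`, i.e. an `n`-step `R`-reduction sequence. -/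
def NSteps {α : Type*} (R : α → α → Prop) (n : ℕ) (x y : α) : Prop :=
  ∃ f : ℕ → α, f 0 = x ∧ f n = y ∧ ∀ i < n, R (f i) (f (i + 1))

/-!
Completed diagrams can be pasted along a common side, and pasting adds up their step-count
inequalities. The local hypothesis completes the diagrams of one step against one step. Since it
leaves at most one `Ro`-step on the closing side, these can be pasted into a strip of one `Ro`-step
against `m` `R`-steps. The `R`-side of a completed strip may have any length, and strips exist for
every length, so `n` of them can be stacked.
-/

section

variable {α : Type*} {R Ro : α → α → Prop} {m m' n n' : ℕ} {x y z : α}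

@[simp]
theorem nSteps_zero : NSteps R 0 x y ↔ x = y := by
  constructor
  · rintro ⟨f, rfl, rfl, -⟩
    rfl
  · rintro rfl
    exact ⟨fun _ => x, rfl, rfl, by simp⟩

@[simp]
theorem nSteps_one : NSteps R 1 x y ↔ R x y := by
  constructor
  · rintro ⟨f, rfl, rfl, hf⟩
    exact hf 0 one_pos
  · intro h
    exact ⟨fun i => if i = 0 then x else y, by simp, by simp, by simpa using h⟩

theorem NSteps.trans (hxy : NSteps R m x y) (hyz : NSteps R n y z) : NSteps R (m + n) x z := by
  obtain ⟨f, rfl, rfl, hf⟩ := hxy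
  obtain ⟨g, hg₀, rfl, hg⟩ := hyz
  refine ⟨fun i => if i < m then f i else g (i - m), ?_, by simp, fun i hi => ?_⟩
  · rcases m.eq_zero_or_pos with rfl | hm
    · simpa using hg₀
    · simp [hm]
  · rcases lt_trichotomy (i + 1) m with h | rfl | h
    · simpa [h, (Nat.lt_succ_self i).trans h] using hf i (by omega)
    · simpa [hg₀] using hf i (by omega)
    · have hle : m ≤ i := by omega
      simpa [hle.not_gt, h.not_gt, Nat.sub_add_comm hle] using hg (i - m) (by omega)

theorem nSteps_add : NSteps R (m + n) x z ↔ ∃ y, NSteps R m x y ∧ NSteps R n y z := by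
  constructor
  · rintro ⟨f, rfl, rfl, hf⟩
    exact ⟨f m, ⟨f, rfl, rfl, fun i hi => hf i (by omega)⟩,
      ⟨fun i => f (m + i), rfl, rfl, fun i hi => hf (m + i) (by omega)⟩⟩
  · rintro ⟨y, hxy, hyz⟩
    exact hxy.trans hyz

/-- Ordered commutation of `n` steps of `Ro` with `m` steps of `R`: every such peak can be closed so
that the branch starting with `Ro` is not longer than the other one. The bound `l ≤ n` on the
closing `Ro`-steps is what allows diagrams to be pasted along them. -/
def OrderedCommutes (Ro R : α → α → Prop) (n m : ℕ) : Prop :=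
  ∀ ⦃G H J : α⦄, NSteps Ro n G H → NSteps R m G J →
    ∃ (K : α) (k l : ℕ), NSteps R k H K ∧ NSteps Ro l J K ∧ l ≤ n ∧ n + k ≤ m + l

namespace OrderedCommutes

theorem zero_left (Ro R : α → α → Prop) (m : ℕ) : OrderedCommutes Ro R 0 m := by
  intro G H J hGH hGJ
  obtain rfl := nSteps_zero.mp hGH
  exact ⟨J, m, 0, hGJ, nSteps_zero.mpr rfl, le_rfl, by omega⟩

theorem zero_right (Ro R : α → α → Prop) (n : ℕ) : OrderedCommutes Ro R n 0 := by
  intro G H J hGH hGJ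
  obtain rfl := nSteps_zero.mp hGJ
  exact ⟨H, 0, n, nSteps_zero.mpr rfl, hGH, le_rfl, by omega⟩

theorem add_left (h : OrderedCommutes Ro R n m) (h' : ∀ k, OrderedCommutes Ro R n' k) :
    OrderedCommutes Ro R (n + n') m := by
  intro G H J hGH hGJ
  obtain ⟨I, hGI, hIH⟩ := nSteps_add.mp hGH
  obtain ⟨K, k, l, hIK, hJK, hln, hnk⟩ := h hGI hGJ
  obtain ⟨L, p, q, hHL, hKL, hqn, hnp⟩ := h' k hIH hIK
  exact ⟨L, p, l + q, hHL, hJK.trans hKL, by omega, by omega⟩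

theorem add_right (h : OrderedCommutes Ro R n m) (h' : ∀ l ≤ n, OrderedCommutes Ro R l m') :
    OrderedCommutes Ro R n (m + m') := by
  intro G H J hGH hGJ
  obtain ⟨I, hGI, hIJ⟩ := nSteps_add.mp hGJ
  obtain ⟨K, k, l, hHK, hIK, hln, hnk⟩ := h hGH hGI
  obtain ⟨L, p, q, hKL, hJL, hql, hlp⟩ := h' l hln hIK hIJ
  exact ⟨L, k + p, q, hHK.trans hKL, hJL, by omega, by omega⟩

theorem one_one_of_local
    (hcomm : ∀ G H J, Ro G H → R G J → H ≠ J → Ro J H ∨ ∃ K, R H K ∧ Ro J K) :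
    OrderedCommutes Ro R 1 1 := by
  intro G H J hGH hGJ
  by_cases hHJ : H = J
  · exact ⟨H, 0, 0, nSteps_zero.mpr rfl, nSteps_zero.mpr hHJ.symm, by omega, by omega⟩
  obtain hJH | ⟨K, hHK, hJK⟩ := hcomm G H J (nSteps_one.mp hGH) (nSteps_one.mp hGJ) hHJ
  · exact ⟨H, 0, 1, nSteps_zero.mpr rfl, nSteps_one.mpr hJH, by omega, by omega⟩
  · exact ⟨K, 1, 1, nSteps_one.mpr hHK, nSteps_one.mpr hJK, by omega, by omega⟩

theorem one_left (h : OrderedCommutes Ro R 1 1) (m : ℕ) : OrderedCommutes Ro R 1 m := by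
  induction m with
  | zero => exact zero_right Ro R 1
  | succ m ih =>
    refine ih.add_right fun l hl => ?_
    obtain rfl | rfl := Nat.le_one_iff_eq_zero_or_eq_one.mp hl
    · exact zero_left Ro R 1
    · exact h

theorem of_one_one (h : OrderedCommutes Ro R 1 1) (n m : ℕ) : OrderedCommutes Ro R n m := by
  induction n generalizing m with
  | zero => exact zero_left Ro R m
  | succ n ih => exact (ih m).add_left h.one_left

end OrderedCommutes

theorem outermost_commutation_general
    (hcomm : ∀ G H J, Ro G H → R G J → H ≠ J → Ro J H ∨ ∃ K, R H K ∧ Ro J K) (n m : ℕ) :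
    OrderedCommutes Ro R n m :=
  (OrderedCommutes.one_one_of_local hcomm).of_one_one n m

end

theorem outermost_commutation
    {α : Type*} (R Ro : α → α → Prop)
    (hsub : ∀ x y, Ro x y → R x y)
    (hcomm : ∀ G H J, Ro G H → R G J → H ≠ J →
      Ro J H ∨ ∃ K, R H K ∧ Ro J K) :
    ∀ (n m : ℕ) (G H J : α), NSteps Ro n G H → NSteps R m G J →
      ∃ (K : α) (k l : ℕ), NSteps R k H K ∧ NSteps Ro l J K ∧ n + k ≤ m + l := by
  intro n m G H J hGH hGJ
  obtain ⟨K, k, l, hHK, hJK, -, hle⟩ := outermost_commutation_general hcomm n m hGH hGJ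
  exact ⟨K, k, l, hHK, hJK, hle⟩
end

section
/- Let α be a type and let R, Ri be binary relations on α (R is 'generic rewriting', Ri is 'innermost rewriting') such that Ri is contained in R and the following local commutation property holds: whenever R G H and Ri G J with H ≠ J, either R J H, or there exists K with Ri H K and R J K. Then for all n, m and all G, H, J, if G R^n H and G Ri^m J, there exist K and natural numbers k, l such that H Ri^k K, J R^l K, and n + k ≤ m + l. -/
/-!
When an `R`-step meets a `Ri`-step, the peak closes with at most one `Ri`-step opposite the given
one. So a single `Ri`-step can be pushed along a whole `R`-sequence, one `R`-step at a time, until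
it either reaches the end or is absorbed. Each elementary diagram satisfies the length inequality
`1 + k ≤ 1 + l`, where `k` and `l` count the closing `Ri`- and `R`-steps, and the inequality is
preserved when diagrams are pasted along a common side. Pasting `m` strips gives the general case.
-/

namespace NSteps

variable {α : Type*} {R : α → α → Prop} {m n : ℕ} {x y z : α}

theorem refl (x : α) : NSteps R 0 x x :=
  ⟨fun _ => x, rfl, rfl, fun _ hi => absurd hi (Nat.not_lt_zero _)⟩

theorem eq_of_zero (h : NSteps R 0 x y) : x = y := by
  obtain ⟨f, rfl, rfl, -⟩ := h
  rfl

theorem head (hxy : R x y) (hyz : NSteps R n y z) : NSteps R (n + 1) x z := by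
  obtain ⟨f, rfl, rfl, hf⟩ := hyz
  refine ⟨fun i => Nat.casesOn i x f, rfl, rfl, fun i hi => ?_⟩
  cases i with
  | zero => exact hxy
  | succ i => exact hf i (Nat.lt_of_succ_lt_succ hi)

theorem single (h : R x y) : NSteps R 1 x y :=
  head h (refl y)

theorem exists_head (h : NSteps R (n + 1) x z) : ∃ y, R x y ∧ NSteps R n y z := by
  obtain ⟨f, rfl, rfl, hf⟩ := h
  exact ⟨f 1, hf 0 n.succ_pos, fun i => f (i + 1), rfl, rfl,
    fun i hi => hf (i + 1) (Nat.succ_lt_succ hi)⟩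

theorem trans_s1 (hxy : NSteps R m x y) (hyz : NSteps R n y z) : NSteps R (m + n) x z := by
  induction m generalizing x with
  | zero =>
    obtain rfl := hxy.eq_of_zero
    rwa [Nat.zero_add]
  | succ m ih =>
    obtain ⟨w, hxw, hwy⟩ := hxy.exists_head
    rw [Nat.succ_add]
    exact head hxw (ih hwy)

end NSteps

/-- The local commutation property of generic rewriting `R` against innermost rewriting `Ri`.
It is asymmetric: a nontrivial peak `y ←R x →Ri z` closes either by one `R`-step from `z` to `y`,
or by one `Ri`-step from `y` and one `R`-step from `z`. -/
def LocallyCommutes {α : Type*} (R Ri : α → α → Prop) : Prop :=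
  ∀ x y z, R x y → Ri x z → y ≠ z → R z y ∨ ∃ w, Ri y w ∧ R z w

section Commutation

variable {α : Type*} {R Ri : α → α → Prop} {n m : ℕ} {x y z : α}

theorem LocallyCommutes.strip (hcomm : LocallyCommutes R Ri)
    (hxy : NSteps R n x y) (hxz : Ri x z) :
    ∃ (w : α) (k l : ℕ), NSteps Ri k y w ∧ NSteps R l z w ∧ n + k ≤ 1 + l := by
  induction n generalizing x z with
  | zero =>
    obtain rfl := hxy.eq_of_zero
    exact ⟨z, 1, 0, .single hxz, .refl z, by lia⟩
  | succ n ih =>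
    obtain ⟨x', hxx', hx'y⟩ := hxy.exists_head
    by_cases hne : x' = z
    · subst hne
      exact ⟨y, 0, n, .refl y, hx'y, by lia⟩
    · obtain hzx' | ⟨z', hx'z', hzz'⟩ := hcomm x x' z hxx' hxz hne
      · exact ⟨y, 0, n + 1, .refl y, .head hzx' hx'y, by lia⟩
      · obtain ⟨w, k, l, hyw, hz'w, hle⟩ := ih hx'y hx'z'
        exact ⟨w, k, l + 1, hyw, .head hzz' hz'w, by lia⟩

theorem innermost_commutation_general (hcomm : LocallyCommutes R Ri)
    (hxy : NSteps R n x y) (hxz : NSteps Ri m x z) :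
    ∃ (w : α) (k l : ℕ), NSteps Ri k y w ∧ NSteps R l z w ∧ n + k ≤ m + l := by
  induction m generalizing n x y with
  | zero =>
    obtain rfl := hxz.eq_of_zero
    exact ⟨y, 0, n, .refl y, hxy, by lia⟩
  | succ m ih =>
    obtain ⟨x', hxx', hx'z⟩ := hxz.exists_head
    obtain ⟨y', k, l, hyy', hx'y', hstrip⟩ := hcomm.strip hxy hxx'
    obtain ⟨w, k', l', hy'w, hzw, hrest⟩ := ih hx'y' hx'z
    exact ⟨w, k + k', l', hyy'.trans_s1 hy'w, hzw, by lia⟩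

end Commutation

theorem innermost_commutation
    {α : Type*} (R Ri : α → α → Prop)
    (hsub : ∀ x y, Ri x y → R x y)
    (hcomm : ∀ G H J, R G H → Ri G J → H ≠ J →
      R J H ∨ ∃ K, Ri H K ∧ R J K) :
    ∀ (n m : ℕ) (G H J : α), NSteps R n G H → NSteps Ri m G J →
      ∃ (K : α) (k l : ℕ), NSteps Ri k H K ∧ NSteps R l J K ∧ n + k ≤ m + l :=
  fun _ _ _ _ _ hGH hGJ => innermost_commutation_general hcomm hGH hGJ
end
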